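/- Assume a_{ij}(ω) ≥ 0 for all i ≠ j and all ω ∈ Ω, and assume there is a measurable function δ̃ : Ω → (0, ∞) such that for every ω ∈ Ω and all i ≠ j one has a_{ij}(θ_t ω) ≥ δ̃(ω) for Lebesgue-a.e. t ∈ [0, 1]. Let u_{ji}(ω) := (U_ω(1)e_i)_j denote the (j,i)-entry of the time-one solution matrix, where e_i is the i-th standard basis vector. Then for every ω ∈ Ω and all i, j ∈ {1,…,N}: (i) u_{ii}(ω) ≥ exp(ã_{ii}(ω)); (ii) for j ≠ i, u_{ji}(ω) ≥ exp( ã_{ii}(ω) + ā_{jj}(ω) )·δ̃(ω); (iii) u_{ji}(ω) ≤ exp( ∫₀¹ Σ_{l=1}^{N} max_{1≤k≤N} a_{lk}(θ_τ ω) dτ ). Here ã_{ii}(ω) := min_{0≤t≤1} ∫₀ᵗ a_{ii}(θ_τ ω) dτ and ā_{jj}(ω) := min_{0≤s≤1} ∫_s¹ a_{jj}(θ_τ ω) dτ. -/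

import Mathlib

open MeasureTheory Matrix Filter

/-- The Euclidean norm on `Fin N → ℝ`. -/
noncomputable def enorm' {N : ℕ} (u : Fin N → ℝ) : ℝ := Real.sqrt (∑ i, (u i) ^ 2)

/-- The operator norm of a matrix with respect to the Euclidean norm. -/
noncomputable def eopNorm {N : ℕ} (M : Matrix (Fin N) (Fin N) ℝ) : ℝ :=
  sSup {c : ℝ | ∃ u : Fin N → ℝ, enorm' u ≤ 1 ∧ c = enorm' (M.mulVec u)}

lemma ii_sum {N : ℕ} {p q : ℝ} {f : Fin N → ℝ → ℝ}
    (hf : ∀ k ∈ Finset.univ, IntervalIntegrable (f k) volume p q) :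
    IntervalIntegrable (fun s => ∑ k, f k s) volume p q := by
  rw [intervalIntegrable_iff]
  exact integrable_finsetSum _ fun k hk => intervalIntegrable_iff.1 (hf k hk)

lemma ac_exp {g : ℝ → ℝ} {a b : ℝ} (hg : AbsolutelyContinuousOnInterval g a b) :
    AbsolutelyContinuousOnInterval (fun t => Real.exp (g t)) a b := by
  obtain ⟨C, hC⟩ := hg.exists_bound
  have hlip : ∀ x ∈ Set.uIcc a b, ∀ y ∈ Set.uIcc a b,
      dist (Real.exp (g x)) (Real.exp (g y)) ≤ Real.exp C * dist (g x) (g y) := by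
    intro x hx y hy
    have := (convex_Iic C).norm_image_sub_le_of_norm_deriv_le (f := Real.exp) (C := Real.exp C)
      (x := g y) (y := g x)
      (fun z _ => Real.differentiableAt_exp) (fun z hz => by simpa using hz)
      ((le_abs_self _).trans (hC y hy)) ((le_abs_self _).trans (hC x hx))
    simpa [dist_eq_norm] using this
  rw [absolutelyContinuousOnInterval_iff] at hg ⊢
  intro ε hε
  obtain ⟨d, hd, h⟩ := hg (ε / Real.exp C) (by positivity)
  refine ⟨d, hd, fun E hE hlt => ?_⟩
  have h1 := h E hE hlt
  have hmem : ∀ i ∈ Finset.range E.1, (E.2 i).1 ∈ Set.uIcc a b ∧ (E.2 i).2 ∈ Set.uIcc a b := by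
    intro i hi
    exact hE.1 i hi
  calc _ ≤ ∑ i ∈ Finset.range E.1, Real.exp C * dist (g (E.2 i).1) (g (E.2 i).2) :=
        Finset.sum_le_sum fun i hi => hlip _ (hmem i hi).1 _ (hmem i hi).2
    _ < ε := by
        rw [← Finset.mul_sum]
        rw [lt_div_iff₀ (by positivity)] at h1
        linarith

lemma key {f a x : ℝ → ℝ} {x0 : ℝ} (hf : ∀ p q, IntervalIntegrable f volume p q)
    (ha : ∀ p q, IntervalIntegrable a volume p q)
    (hx : ∀ t, x t = x0 + ∫ s in (0:ℝ)..t, f s) (t : ℝ) :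
    x t * Real.exp (-∫ s in (0:ℝ)..t, a s) =
      x0 + ∫ s in (0:ℝ)..t, (f s - a s * x s) * Real.exp (-∫ r in (0:ℝ)..s, a r) := by
  have hx' : x = fun t => x0 + ∫ s in (0:ℝ)..t, f s := funext hx
  have acf := (hf 0 t).absolutelyContinuousOnInterval_intervalIntegral (c := 0) (by simp)
  have aca := (ha 0 t).absolutelyContinuousOnInterval_intervalIntegral (c := 0) (by simp)
  have acx : AbsolutelyContinuousOnInterval x 0 t := by
    have hc : AbsolutelyContinuousOnInterval (fun _ : ℝ => x0) 0 t :=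
      (LipschitzWith.const x0).lipschitzOnWith.absolutelyContinuousOnInterval
    rw [hx']
    exact hc.add acf
  have ace : AbsolutelyContinuousOnInterval (fun t => Real.exp (-∫ s in (0:ℝ)..t, a s)) 0 t :=
    ac_exp (aca.neg)
  have h := acx.integral_deriv_mul_eq_sub ace
  have h0 : x 0 = x0 := by simp [hx]
  simp only [intervalIntegral.integral_same, neg_zero, Real.exp_zero, mul_one, h0] at h
  rw [eq_comm, ← eq_sub_iff_add_eq', ← h]
  apply intervalIntegral.integral_congr_ae
  filter_upwards [(hf 0 t).ae_hasDerivAt_integral, (ha 0 t).ae_hasDerivAt_integral] with s h1 h2 h3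
  have h4 : s ∈ Set.uIcc 0 t := Set.uIoc_subset_uIcc h3
  have d1 : HasDerivAt x (f s) s := by
    rw [hx']; exact (h1 h4 0 (by simp)).const_add _
  have d2 := (h2 h4 0 (by simp)).neg.exp
  rw [d1.deriv]
  erw [d2.deriv]
  simp only [Pi.neg_apply]
  ring

lemma cont_prim {a : ℝ → ℝ} (ha : ∀ p q, IntervalIntegrable a volume p q) :
    Continuous fun t => ∫ s in (0:ℝ)..t, a s :=
  intervalIntegral.continuous_primitive ha 0

/-- scalar comparison, upper bound -/
lemma key_le {f a x : ℝ → ℝ} {x0 : ℝ} (hf : ∀ p q, IntervalIntegrable f volume p q)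
    (ha : ∀ p q, IntervalIntegrable a volume p q)
    (hx : ∀ t, x t = x0 + ∫ s in (0:ℝ)..t, f s) (h : ∀ s, 0 ≤ s → f s ≤ a s * x s)
    (t : ℝ) (ht : 0 ≤ t) : x t ≤ x0 * Real.exp (∫ s in (0:ℝ)..t, a s) := by
  have hk := key hf ha hx t
  have : ∫ s in (0:ℝ)..t, (f s - a s * x s) * Real.exp (-∫ r in (0:ℝ)..s, a r) ≤ 0 := by
    have h1 : 0 ≤ ∫ s in (0:ℝ)..t, -((f s - a s * x s) * Real.exp (-∫ r in (0:ℝ)..s, a r)) := by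
      apply intervalIntegral.integral_nonneg ht
      intro s hs
      have := h s hs.1
      have := Real.exp_pos (-∫ r in (0:ℝ)..s, a r)
      nlinarith
    rw [intervalIntegral.integral_neg] at h1
    linarith
  have h2 : x t * Real.exp (-∫ s in (0:ℝ)..t, a s) ≤ x0 := by linarith
  rw [Real.exp_neg, ← div_eq_mul_inv, div_le_iff₀ (Real.exp_pos _)] at h2
  exact h2

lemma gronwall0 {c n : ℝ → ℝ} (hc : ∀ p q, IntervalIntegrable c volume p q)
    (hc0 : ∀ t, 0 ≤ c t) (hn : Continuous n)
    (h : ∀ t, 0 ≤ t → n t ≤ ∫ s in (0:ℝ)..t, c s * n s) (t : ℝ) (ht : 0 ≤ t) : n t ≤ 0 := by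
  have := key_le (x0 := 0) (f := fun s => c s * n s) (a := c)
    (x := fun t => ∫ s in (0:ℝ)..t, c s * n s)
    (fun p q => (hc p q).mul_continuousOn hn.continuousOn) hc (by simp)
    (fun s hs => mul_le_mul_of_nonneg_left (h s hs) (hc0 s)) t ht
  have h2 := h t ht
  simp only [zero_mul] at this
  linarith

lemma nonneg_of_nonneg {N : ℕ} {B : ℝ → Fin N → Fin N → ℝ} {v : ℝ → Fin N → ℝ} {v0 : Fin N → ℝ}
    (hB : ∀ i j p q, IntervalIntegrable (fun t => B t i j) volume p q)
    (hB0 : ∀ t i j, 0 ≤ B t i j) (hv : ∀ i, Continuous fun t => v t i)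
    (hv0 : ∀ i, 0 ≤ v0 i)
    (h : ∀ t i, v t i = v0 i + ∫ s in (0:ℝ)..t, ∑ l, B s i l * v s l)
    (t : ℝ) (ht : 0 ≤ t) (i : Fin N) : 0 ≤ v t i := by
  have hint : ∀ (w : ℝ → Fin N → ℝ), (∀ i, Continuous fun t => w t i) → ∀ i p q,
      IntervalIntegrable (fun s => ∑ l, B s i l * w s l) volume p q := by
    intro w hw i p q
    have := ii_sum (p := p) (q := q)
      (f := fun l s => B s i l * w s l)
      (fun l _ => (hB i l p q).mul_continuousOn (hw l).continuousOn)
    simpa using! this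
  have hnc : ∀ i, Continuous fun t => max (-v t i) 0 := fun i => (hv i).neg.max continuous_const
  have h1 : ∀ t, 0 ≤ t → ∀ i, max (-v t i) 0 ≤ ∫ s in (0:ℝ)..t, ∑ l, B s i l * max (-v s l) 0 := by
    intro t ht i
    apply max_le
    · have h2 : ∫ s in (0:ℝ)..t, -∑ l, B s i l * v s l ≤
          ∫ s in (0:ℝ)..t, ∑ l, B s i l * max (-v s l) 0 := by
        apply intervalIntegral.integral_mono_on ht ((hint v hv i 0 t).neg)
          (hint (fun t i => max (-v t i) 0) hnc i 0 t)
        intro s _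
        simp only [Pi.neg_apply]
        rw [← Finset.sum_neg_distrib]
        apply Finset.sum_le_sum
        intro l _
        rw [← mul_neg]
        exact mul_le_mul_of_nonneg_left (le_max_left _ _) (hB0 _ _ _)
      rw [intervalIntegral.integral_neg] at h2
      have := h t i
      have := hv0 i
      linarith
    · apply intervalIntegral.integral_nonneg ht
      intro s _
      exact Finset.sum_nonneg fun l _ => mul_nonneg (hB0 _ _ _) (le_max_right _ _)
  have hCint : ∀ p q, IntervalIntegrable (fun s => ∑ k, ∑ l, B s k l) volume p q := by
    intro p q
    have h2 := ii_sum (p := p) (q := q)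
      (f := fun k s => ∑ l, B s k l * 1) (fun k _ => hint (fun _ _ => 1) (fun _ => continuous_const) k p q)
    simpa using! h2
  have hN : Continuous fun t => ∑ k, max (-v t k) 0 := continuous_finsetSum _ fun k _ => hnc k
  have hg := gronwall0 (c := fun s => ∑ k, ∑ l, B s k l) (n := fun t => ∑ k, max (-v t k) 0)
    hCint (fun t => Finset.sum_nonneg fun k _ => Finset.sum_nonneg fun l _ => hB0 _ _ _) hN
    (fun t ht => by
      calc ∑ k, max (-v t k) 0 ≤ ∑ k, ∫ s in (0:ℝ)..t, ∑ l, B s k l * max (-v s l) 0 :=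
            Finset.sum_le_sum fun k _ => h1 t ht k
        _ = ∫ s in (0:ℝ)..t, ∑ k, ∑ l, B s k l * max (-v s l) 0 := by
            rw [intervalIntegral.integral_finsetSum]
            intro k _
            exact hint (fun t i => max (-v t i) 0) hnc k 0 t
        _ ≤ _ := by
            apply intervalIntegral.integral_mono_on ht
            · have h2 := ii_sum (p := 0) (q := t)
                (f := fun k s => ∑ l, B s k l * max (-v s l) 0)
                (fun k _ => hint (fun t i => max (-v t i) 0) hnc k 0 t)
              simpa using! h2
            · exact (hCint 0 t).mul_continuousOn hN.continuousOn
            · intro s _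
              rw [Finset.sum_mul]
              apply Finset.sum_le_sum
              intro k _
              rw [Finset.sum_mul]
              apply Finset.sum_le_sum
              intro l _
              apply mul_le_mul_of_nonneg_left _ (hB0 _ _ _)
              exact Finset.single_le_sum (f := fun l => max (-v s l) 0)
                (fun l _ => le_max_right _ _) (Finset.mem_univ l)) t ht
  have h3 : max (-v t i) 0 ≤ ∑ k, max (-v t k) 0 :=
    Finset.single_le_sum (f := fun l => max (-v t l) 0)
                (fun l _ => le_max_right _ _) (Finset.mem_univ i)
  have := le_max_left (-v t i) 0
  linarith

lemma sum_int {N : ℕ} {B : ℝ → Fin N → Fin N → ℝ} {w : ℝ → Fin N → ℝ}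
    (hB : ∀ i j p q, IntervalIntegrable (fun t => B t i j) volume p q)
    (hw : ∀ i, Continuous fun t => w t i) (i : Fin N) (p q : ℝ) :
      IntervalIntegrable (fun s => ∑ l, B s i l * w s l) volume p q := by
  have := ii_sum (p := p) (q := q)
    (f := fun l s => B s i l * w s l)
    (fun l _ => (hB i l p q).mul_continuousOn (hw l).continuousOn)
  simpa using! this

/-- nonnegativity for cooperative systems -/
lemma coop_nonneg {N : ℕ} {B : ℝ → Fin N → Fin N → ℝ} {u : ℝ → Fin N → ℝ} {u0 : Fin N → ℝ}
    (hB : ∀ i j p q, IntervalIntegrable (fun t => B t i j) volume p q)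
    (hB0 : ∀ t i j, i ≠ j → 0 ≤ B t i j) (hu : ∀ i, Continuous fun t => u t i)
    (hu0 : ∀ i, 0 ≤ u0 i)
    (h : ∀ t i, u t i = u0 i + ∫ s in (0:ℝ)..t, ∑ l, B s i l * u s l)
    (t : ℝ) (ht : 0 ≤ t) (i : Fin N) : 0 ≤ u t i := by
  let lam : ℝ → ℝ := fun t => ∑ k, |B t k k|
  have hlam : ∀ p q, IntervalIntegrable lam volume p q := by
    intro p q
    have h2 := ii_sum (p := p) (q := q)
      (f := fun k s => |B s k k|) (fun k _ => (hB k k p q).abs)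
    simpa using! h2
  have hE : Continuous fun t => Real.exp (-∫ s in (0:ℝ)..t, -lam s) :=
    Real.continuous_exp.comp (cont_prim fun p q => (hlam p q).neg).neg
  have h1 := nonneg_of_nonneg (B := fun t i j => B t i j + if i = j then lam t else 0)
    (v := fun t i => u t i * Real.exp (-∫ s in (0:ℝ)..t, -lam s)) (v0 := u0)
    (by
      intro i j p q
      by_cases hij : i = j
      · simpa [hij] using (hB j j p q).add (hlam p q)
      · simpa [hij] using hB i j p q)
    (by
      intro t i j
      by_cases hij : i = j
      · subst hij
        have h3 : |B t i i| ≤ lam t :=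
          Finset.single_le_sum (f := fun k => |B t k k|) (fun _ _ => abs_nonneg _)
            (Finset.mem_univ i)
        have := neg_abs_le (B t i i)
        simp only [if_true]
        linarith
      · simpa [hij] using hB0 t i j hij)
    (fun i => (hu i).mul hE) hu0
    (by
      intro t i
      have := key (a := fun s => -lam s) (sum_int hB hu i) (fun p q => (hlam p q).neg)
        (fun t => h t i) t
      rw [this]
      congr 1
      apply intervalIntegral.integral_congr
      intro s _
      simp only [add_mul, Finset.sum_add_distrib, ite_mul, zero_mul, Finset.sum_ite_eq,
        Finset.mem_univ, if_true, sub_mul, Finset.sum_mul, neg_mul, mul_assoc]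
      ring)
    t ht i
  exact nonneg_of_mul_nonneg_left h1 (Real.exp_pos _)

lemma le_exp_iInf {N : ℕ} {B : ℝ → Fin N → Fin N → ℝ} {u : ℝ → Fin N → ℝ} (i : Fin N)
    (hB : ∀ i j p q, IntervalIntegrable (fun t => B t i j) volume p q)
    (hB0 : ∀ t i j, i ≠ j → 0 ≤ B t i j) (hu : ∀ i, Continuous fun t => u t i)
    (h : ∀ t k, u t k = (Pi.single i 1 : Fin N → ℝ) k + ∫ s in (0:ℝ)..t, ∑ l, B s k l * u s l)
    (t : ℝ) (ht : t ∈ Set.Icc (0:ℝ) 1) :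
    Real.exp (⨅ t : Set.Icc (0:ℝ) 1, ∫ τ in (0:ℝ)..(t : ℝ), B τ i i) ≤ u t i := by
  have hnn := coop_nonneg hB hB0 hu (by
    intro k; by_cases hk : k = i
    · subst hk; simp
    · simp [hk]) h
  have hk := key (sum_int hB hu i) (hB i i) (fun t => h t i) t
  have h1 : 0 ≤ ∫ s in (0:ℝ)..t, ((∑ l, B s i l * u s l) - B s i i * u s i) *
      Real.exp (-∫ r in (0:ℝ)..s, B r i i) := by
    apply intervalIntegral.integral_nonneg ht.1
    intro s hs
    apply mul_nonneg _ (Real.exp_pos _).le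
    rw [← Finset.add_sum_erase _ _ (Finset.mem_univ i), add_sub_cancel_left]
    exact Finset.sum_nonneg fun l hl =>
      mul_nonneg (hB0 _ _ _ (Finset.ne_of_mem_erase hl).symm) (hnn s hs.1 l)
  have h2 : 1 ≤ u t i * Real.exp (-∫ s in (0:ℝ)..t, B s i i) := by
    rw [hk]; simp; simpa using h1
  rw [Real.exp_neg, ← div_eq_mul_inv, le_div_iff₀ (Real.exp_pos _), one_mul] at h2
  refine le_trans (Real.exp_le_exp.2 ?_) h2
  refine ciInf_le (f := fun t : Set.Icc (0:ℝ) 1 => ∫ τ in (0:ℝ)..(t : ℝ), B τ i i) ?_ ⟨t, ht⟩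
  exact (isCompact_range ((cont_prim (hB i i)).comp continuous_subtype_val)).bddBelow

lemma abs_le_eopNorm {N : ℕ} (M : Matrix (Fin N) (Fin N) ℝ) (i j : Fin N) :
    |M i j| ≤ eopNorm M := by
  have hb : BddAbove {c : ℝ | ∃ u : Fin N → ℝ, enorm' u ≤ 1 ∧ c = enorm' (M.mulVec u)} := by
    refine ⟨Real.sqrt (∑ i, (∑ j, |M i j|) ^ 2), ?_⟩
    rintro c ⟨u, hu, rfl⟩
    apply Real.sqrt_le_sqrt
    apply Finset.sum_le_sum
    intro i _
    apply sq_le_sq'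
    all_goals
      have hu1 : ∀ k, |u k| ≤ 1 := by
        intro k
        refine le_trans ?_ hu
        apply Real.abs_le_sqrt
        exact Finset.single_le_sum (f := fun k => u k ^ 2) (fun _ _ => sq_nonneg _)
          (Finset.mem_univ k)
      have : |M.mulVec u i| ≤ ∑ j, |M i j| := by
        have hm : M.mulVec u i = ∑ k, M i k * u k := rfl
        rw [hm]
        refine (Finset.abs_sum_le_sum_abs (fun k => M i k * u k) _).trans (Finset.sum_le_sum fun k _ => ?_)
        rw [abs_mul]
        exact mul_le_of_le_one_right (abs_nonneg _) (hu1 k)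
      have := abs_le.1 this
      linarith [this.1, this.2]
  have h1 : enorm' (M.mulVec (Pi.single j 1)) ≤ eopNorm M := by
    apply le_csSup hb
    refine ⟨Pi.single j 1, ?_, rfl⟩
    unfold enorm'
    simp [Pi.single_apply]
  refine le_trans ?_ h1
  apply Real.abs_le_sqrt
  have := Finset.single_le_sum (f := fun k => (M.mulVec (Pi.single j 1)) k ^ 2)
    (fun _ _ => sq_nonneg _) (Finset.mem_univ i)
  simpa using this

lemma main_abs {N : ℕ} (hN : 2 ≤ N) {B : ℝ → Fin N → Fin N → ℝ} {u : ℝ → Fin N → ℝ} (i : Fin N)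
    (hBm : ∀ i j, Measurable fun t => B t i j)
    (hB : ∀ i j p q, IntervalIntegrable (fun t => B t i j) volume p q)
    (hB0 : ∀ t i j, i ≠ j → 0 ≤ B t i j) (hu : ∀ i, Continuous fun t => u t i)
    (h : ∀ t k, u t k = (Pi.single i 1 : Fin N → ℝ) k + ∫ s in (0:ℝ)..t, ∑ l, B s k l * u s l)
    (d : ℝ) (hd : 0 < d)
    (hδ : ∀ (i j : Fin N), i ≠ j →
      ∀ᵐ t ∂(volume.restrict (Set.Icc (0:ℝ) 1)), d ≤ B t i j) (j : Fin N) :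
    (j ≠ i → Real.exp ((⨅ t : Set.Icc (0:ℝ) 1, ∫ τ in (0:ℝ)..(t : ℝ), B τ i i) +
          (⨅ s : Set.Icc (0:ℝ) 1, ∫ τ in (s : ℝ)..(1:ℝ), B τ j j)) * d ≤ u 1 j) ∧
    u 1 j ≤ Real.exp (∫ τ in (0:ℝ)..(1:ℝ), ∑ l, ⨆ k, B τ l k) := by
  have hnn := coop_nonneg hB hB0 hu (by
    intro k; by_cases hk : k = i
    · subst hk; simp
    · simp [hk]) h
  constructor
  · intro hji
    have hk := key (sum_int hB hu j) (hB j j) (fun t => h t j) 1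
    have hlow := le_exp_iInf i hB hB0 hu h
    set α := ⨅ t : Set.Icc (0:ℝ) 1, ∫ τ in (0:ℝ)..(t : ℝ), B τ i i
    set β := ⨅ s : Set.Icc (0:ℝ) 1, ∫ τ in (s : ℝ)..(1:ℝ), B τ j j with hβ
    have hsplit : ∀ s, ∫ τ in (s : ℝ)..(1:ℝ), B τ j j =
        (∫ τ in (0:ℝ)..1, B τ j j) - ∫ τ in (0:ℝ)..s, B τ j j := fun s =>
      (intervalIntegral.integral_interval_sub_left (hB j j 0 1) (hB j j 0 s)).symm
    have hβle : ∀ s ∈ Set.Icc (0:ℝ) 1, β ≤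
        (∫ τ in (0:ℝ)..1, B τ j j) - ∫ τ in (0:ℝ)..s, B τ j j := by
      intro s hs
      rw [← hsplit]
      refine ciInf_le (f := fun s : Set.Icc (0:ℝ) 1 => ∫ τ in (s:ℝ)..1, B τ j j) ?_ ⟨s, hs⟩
      have he : (fun s : Set.Icc (0:ℝ) 1 => ∫ τ in (s:ℝ)..1, B τ j j) = fun s : Set.Icc (0:ℝ) 1 =>
          (∫ τ in (0:ℝ)..1, B τ j j) - ∫ τ in (0:ℝ)..(s:ℝ), B τ j j := funext fun s => hsplit s
      rw [he]
      exact (isCompact_range ((continuous_const.sub (cont_prim (hB j j))).comp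
        continuous_subtype_val)).bddBelow
    set J := ∫ τ in (0:ℝ)..1, B τ j j
    have h1 : ∫ s in (0:ℝ)..1, d * Real.exp α * Real.exp (β - J) ≤
        ∫ s in (0:ℝ)..1, ((∑ l, B s j l * u s l) - B s j j * u s j) *
          Real.exp (-∫ r in (0:ℝ)..s, B r j j) := by
      apply intervalIntegral.integral_mono_ae_restrict zero_le_one (by simp)
      · apply IntervalIntegrable.mul_continuousOn
        · exact (sum_int hB hu j 0 1).sub ((hB j j 0 1).mul_continuousOn (hu j).continuousOn)
        · exact (Real.continuous_exp.comp (cont_prim (hB j j)).neg).continuousOn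
      · filter_upwards [hδ j i hji, ae_restrict_mem measurableSet_Icc] with s hs hsm
        have e1 : Real.exp (β - J) ≤ Real.exp (-∫ r in (0:ℝ)..s, B r j j) :=
          Real.exp_le_exp.2 (by linarith [hβle s hsm])
        have e2 : d * Real.exp α ≤ (∑ l, B s j l * u s l) - B s j j * u s j := by
          rw [← Finset.add_sum_erase _ _ (Finset.mem_univ j), add_sub_cancel_left]
          calc d * Real.exp α ≤ B s j i * u s i :=
                mul_le_mul hs (hlow s hsm) (Real.exp_pos _).le (hd.le.trans hs)
            _ ≤ _ := Finset.single_le_sum (f := fun l => B s j l * u s l)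
                (fun l hl => mul_nonneg (hB0 _ _ _ (Finset.ne_of_mem_erase hl).symm)
                  (hnn s hsm.1 l)) (Finset.mem_erase.2 ⟨hji.symm, Finset.mem_univ i⟩)
        exact mul_le_mul e2 e1 (Real.exp_pos _).le (le_trans (by positivity) e2)
    simp only [intervalIntegral.integral_const, sub_zero, one_smul] at h1
    have h2 : d * Real.exp α * Real.exp (β - J) ≤ u 1 j * Real.exp (-J) := by
      rw [hk]; simp only [Pi.single_apply, hji, if_false, zero_add]; exact h1
    rw [sub_eq_add_neg, Real.exp_add, ← mul_assoc] at h2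
    have h3 := le_of_mul_le_mul_right h2 (Real.exp_pos _)
    rw [Real.exp_add]
    linarith
  · have : Nonempty (Fin N) := ⟨i⟩
    have hle : ∀ t l k, B t l k ≤ ⨆ k, B t l k := fun t l k =>
      le_ciSup (f := fun k => B t l k) (Set.finite_range _).bddAbove k
    have hsup0 : ∀ t l, 0 ≤ ⨆ k, B t l k := by
      intro t l
      have : Nontrivial (Fin N) := Fin.nontrivial_iff_two_le.2 hN
      obtain ⟨k, hk⟩ := exists_ne l
      exact (hB0 t l k hk.symm).trans (hle t l k)
    have hsupint : ∀ l p q, IntervalIntegrable (fun t => ⨆ k, B t l k) volume p q := by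
      intro l p q
      have h2 := ii_sum (p := p) (q := q)
        (f := fun k s => |B s l k|) (fun k _ => (hB l k p q).abs)
      refine h2.mono_fun (Measurable.iSup fun k => hBm l k).aestronglyMeasurable ?_
      refine Eventually.of_forall fun t => ?_
      beta_reduce
      rw [Real.norm_of_nonneg (hsup0 t l), Real.norm_of_nonneg (Finset.sum_nonneg fun _ _ => abs_nonneg _)]
      refine ciSup_le fun k => (le_abs_self _).trans ?_
      exact Finset.single_le_sum (f := fun k => |B t l k|) (fun _ _ => abs_nonneg _)
            (Finset.mem_univ k)
    have hMint : ∀ p q, IntervalIntegrable (fun t => ∑ l, ⨆ k, B t l k) volume p q := by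
      intro p q
      have h2 := ii_sum (p := p) (q := q)
        (f := fun l t => ⨆ k, B t l k) (fun l _ => hsupint l p q)
      simpa using! h2
    have hFint : ∀ p q, IntervalIntegrable (fun s => ∑ k, ∑ l, B s k l * u s l) volume p q := by
      intro p q
      have h2 := ii_sum (p := p) (q := q)
        (f := fun k s => ∑ l, B s k l * u s l) (fun k _ => sum_int hB hu k p q)
      simpa using! h2
    have h1 := key_le (x := fun t => ∑ k, u t k) (x0 := 1) hFint hMint (by
      intro t
      rw [intervalIntegral.integral_finsetSum (fun k _ => sum_int hB hu k 0 t)]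
      rw [Finset.sum_congr rfl fun k _ => h t k, Finset.sum_add_distrib]
      simp) (by
      intro s hs
      rw [Finset.sum_mul]
      apply Finset.sum_le_sum
      intro k _
      rw [Finset.mul_sum]
      exact Finset.sum_le_sum fun l _ => mul_le_mul_of_nonneg_right (hle s k l) (hnn s hs l))
      1 zero_le_one
    rw [one_mul] at h1
    exact le_trans (Finset.single_le_sum (f := fun k => u 1 k) (fun k _ => hnn 1 zero_le_one k)
      (Finset.mem_univ j)) h1

/-- Entrywise bounds on the time-one solution matrix of a random
cooperative linear ODE system with off-diagonal positivity. -/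
theorem stmt_14 {N : ℕ} (hN : 2 ≤ N)
    {Ω : Type*} [MeasurableSpace Ω] (ℙ : Measure Ω) [IsProbabilityMeasure ℙ]
    [ℙ.IsComplete]
    (θ : ℝ → Ω → Ω) (hθ0 : θ 0 = id)
    (hθadd : ∀ s t : ℝ, θ (s + t) = θ s ∘ θ t)
    (hθjm : Measurable fun p : ℝ × Ω => θ p.1 p.2)
    (hθmp : ∀ t, MeasurePreserving (θ t) ℙ ℙ)
    (hθerg : ∀ F : Set Ω, MeasurableSet F → (∀ t, θ t ⁻¹' F = F) →
      ℙ F = 0 ∨ ℙ F = 1)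
    (A : Ω → Matrix (Fin N) (Fin N) ℝ)
    (hAmeas : ∀ i j, Measurable fun ω => A ω i j)
    (hAloc : ∀ ω, ∀ a c : ℝ,
      IntervalIntegrable (fun t => eopNorm (A (θ t ω))) volume a c)
    (U : Ω → ℝ → Matrix (Fin N) (Fin N) ℝ)
    (hUcont : ∀ ω (u0 : Fin N → ℝ), Continuous fun t : ℝ => (U ω t).mulVec u0)
    (hUeq : ∀ ω (u0 : Fin N → ℝ) (t : ℝ),
      (U ω t).mulVec u0 = u0 + ∫ s in (0:ℝ)..t, (A (θ s ω)).mulVec ((U ω s).mulVec u0))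
    (hO1 : ∀ ω (i j : Fin N), i ≠ j → 0 ≤ A ω i j)
    (δ : Ω → ℝ) (hδmeas : Measurable δ) (hδpos : ∀ ω, 0 < δ ω)
    (hδ : ∀ ω (i j : Fin N), i ≠ j →
      ∀ᵐ t ∂(volume.restrict (Set.Icc (0:ℝ) 1)), δ ω ≤ A (θ t ω) i j) :
    -- (i)
    (∀ ω (i : Fin N),
      Real.exp (⨅ t : Set.Icc (0:ℝ) 1, ∫ τ in (0:ℝ)..(t : ℝ), A (θ τ ω) i i) ≤
        (U ω 1).mulVec (Pi.single i 1) i) ∧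
    -- (ii)
    (∀ ω (i j : Fin N), j ≠ i →
      Real.exp ((⨅ t : Set.Icc (0:ℝ) 1, ∫ τ in (0:ℝ)..(t : ℝ), A (θ τ ω) i i) +
          (⨅ s : Set.Icc (0:ℝ) 1, ∫ τ in (s : ℝ)..(1:ℝ), A (θ τ ω) j j)) * δ ω ≤
        (U ω 1).mulVec (Pi.single i 1) j) ∧
    -- (iii)
    (∀ ω (i j : Fin N),
      (U ω 1).mulVec (Pi.single i 1) j ≤
        Real.exp (∫ τ in (0:ℝ)..(1:ℝ), ∑ l, ⨆ k, A (θ τ ω) l k)) := by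
  have hBm : ∀ ω i j, Measurable fun t => A (θ t ω) i j := fun ω i j =>
    (hAmeas i j).comp (hθjm.comp (measurable_id.prodMk measurable_const))
  have hB : ∀ ω i j p q, IntervalIntegrable (fun t => A (θ t ω) i j) volume p q := by
    intro ω i j p q
    refine (hAloc ω p q).mono_fun (hBm ω i j).aestronglyMeasurable ?_
    exact Eventually.of_forall fun t => (abs_le_eopNorm (A (θ t ω)) i j).trans (le_abs_self _)
  have hu : ∀ ω u0 i, Continuous fun t => (U ω t).mulVec u0 i := fun ω u0 i =>
    (continuous_apply i).comp (hUcont ω u0)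
  have h : ∀ ω u0 t k, (U ω t).mulVec u0 k = u0 k + ∫ s in (0:ℝ)..t, ∑ l, A (θ s ω) k l *
      (U ω s).mulVec u0 l := by
    intro ω u0 t k
    have hint : ∀ k, IntervalIntegrable (fun s => ∑ l, A (θ s ω) k l * (U ω s).mulVec u0 l)
      volume 0 t := fun k =>
        sum_int (B := fun t => A (θ t ω)) (w := fun s => (U ω s).mulVec u0) (hB ω) (hu ω u0) k 0 t
    have hv : IntervalIntegrable (fun s => (A (θ s ω)).mulVec ((U ω s).mulVec u0)) volume 0 t := by
      rw [intervalIntegrable_iff]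
      exact Integrable.of_eval fun k => (intervalIntegrable_iff.1 (hint k))
    have h2 := (ContinuousLinearMap.proj (R := ℝ) (φ := fun _ : Fin N => ℝ)
      k).intervalIntegral_comp_comm hv
    rw [hUeq ω u0 t, Pi.add_apply]
    congr 1
    exact h2.symm
  have hB0 : ∀ ω t i j, i ≠ j → 0 ≤ A (θ t ω) i j := fun ω t i j hij => hO1 _ i j hij
  have hmain := fun ω i j => main_abs hN (B := fun t => A (θ t ω)) i (hBm ω) (hB ω) (hB0 ω)
    (hu ω (Pi.single i 1)) (h ω (Pi.single i 1)) (δ ω) (hδpos ω) (hδ ω) j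
  refine ⟨fun ω i => ?_, fun ω i j hji => (hmain ω i j).1 hji, fun ω i j => (hmain ω i j).2⟩
  exact le_exp_iInf (B := fun t => A (θ t ω)) i (hB ω) (hB0 ω)
    (hu ω (Pi.single i 1)) (h ω (Pi.single i 1)) 1 (by simp)
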